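/- Let p be a prime with p > h, and let λ = w·0 + pσ ∈ X⁺ ∩ C̄_ℤ with w ∈ W and σ ∈ X. If w' ∈ W and σ' ∈ X satisfy w'·λ = pσ', then w' = w⁻¹ and σ' = w⁻¹σ. In particular, there is exactly one w' ∈ W for which w'·λ lies in pX, and its length equals the length of w. -/

import Mathlib

/-!
Put `u = w'w`. The hypotheses `λ + ρ = wρ + pσ` and `w'(λ + ρ) = ρ + pσ'` combine to
`uρ - ρ = p(σ' - w'σ) ∈ pX`, so it suffices to show that this forces `u = 1`.

For a simple root `α` we have `⟨ρ, α∨⟩ = 1`, so the integer `⟨uρ, α∨⟩ = ⟨ρ, (u⁻¹α)∨⟩` is congruent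
to `1` modulo `p`. Its absolute value is at most `⟨ρ, a₀∨⟩ = h - 1`, because `a₀∨` is the highest
coroot, and `p > h` forces it to be `1`. Hence `uρ = ρ`. Then `u` preserves the sign of `⟪ρ, ·⟫`, so
it maps simple roots to positive roots, and by the exchange condition a reduced word for `u` is
empty.

Irreducibility enters in the bound `⟨ρ, b∨⟩ ≤ ⟨ρ, a₀∨⟩`: a root `b` maximizing the left-hand side is
dominant, hence not orthogonal to `a₀`, and then `b = a₀` or `a₀∨ - b∨` is a positive coroot.
-/

open scoped RealInnerProductSpace

namespace PaperDNN

variable {E : Type*} [NormedAddCommGroup E] [InnerProductSpace ℝ E]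

/-- The coroot pairing `⟨x, α∨⟩ = 2⟪x,α⟫/⟪α,α⟫`. -/
noncomputable def pair (x a : E) : ℝ := 2 * ⟪x, a⟫ / ⟪a, a⟫

/-- `Φ` is a reduced irreducible root system in the Euclidean space `E`. -/
structure IsRootSystem (Φ : Finset E) : Prop where
  nonempty : Φ.Nonempty
  ne_zero : ∀ α ∈ Φ, α ≠ 0
  span_top : Submodule.span ℝ (Φ : Set E) = ⊤
  reduced : ∀ α ∈ Φ, ∀ t : ℝ, t • α ∈ Φ → t = 1 ∨ t = -1
  reflect_mem : ∀ α ∈ Φ, ∀ β ∈ Φ, β - pair β α • α ∈ Φ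
  pair_int : ∀ α ∈ Φ, ∀ β ∈ Φ, ∃ n : ℤ, pair β α = (n : ℝ)
  irred : ∀ S T : Set E, S ∪ T = (Φ : Set E) → S.Nonempty → T.Nonempty →
      (∀ a ∈ S, ∀ b ∈ T, ⟪a, b⟫ = 0) → False

/-- `Δ` is a base of simple roots for `Φ`: every root is a nonnegative or
nonpositive integral combination of the simple roots. -/
structure IsBase (Φ Δ : Finset E) : Prop where
  subset : Δ ⊆ Φ
  indep : LinearIndependent ℝ (fun a : {x // x ∈ Δ} => (a : E))
  root_decomp : ∀ β ∈ Φ, (∃ c : E → ℕ, β = ∑ α ∈ Δ, (c α : ℝ) • α) ∨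
      (∃ c : E → ℕ, β = -(∑ α ∈ Δ, (c α : ℝ) • α))

open Classical in
/-- The positive roots `Φ⁺` of `Φ` with respect to the base `Δ`. -/
noncomputable def posRoots (Φ Δ : Finset E) : Finset E :=
  Φ.filter fun β => ∃ c : E → ℕ, β = ∑ α ∈ Δ, (c α : ℝ) • α

/-- `ρ`, one-half the sum of the positive roots. -/
noncomputable def rho (Φ Δ : Finset E) : E := (2⁻¹ : ℝ) • ∑ β ∈ posRoots Φ Δ, β

/-- The Weyl group of `Φ`, the subgroup of `GL(E)` generated by the reflections
`s_α : x ↦ x − ⟨x,α∨⟩α` in the roots `α ∈ Φ`.  Applied to a subset `J` of the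
simple roots it yields the parabolic subgroup `W_J`. -/
def Weyl (Φ : Finset E) : Subgroup (E ≃ₗ[ℝ] E) :=
  Subgroup.closure { w : E ≃ₗ[ℝ] E | ∃ α ∈ Φ, ∀ x, w x = x - pair x α • α }

/-- The dot action `w·λ = w(λ+ρ) − ρ`. -/
noncomputable def dotAct (Φ Δ : Finset E) (w : E ≃ₗ[ℝ] E) (lam : E) : E :=
  w (lam + rho Φ Δ) - rho Φ Δ

/-- The weight lattice `X = {λ ∈ E : ⟨λ,α∨⟩ ∈ ℤ for all α ∈ Φ}`. -/
def weightLattice (Φ : Finset E) : Set E :=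
  { lam | ∀ α ∈ Φ, ∃ n : ℤ, pair lam α = (n : ℝ) }

/-- The root lattice `ℤΦ`. -/
def rootLattice (Φ : Finset E) : AddSubgroup E := AddSubgroup.closure (Φ : Set E)

/-- The bottom `p`-alcove `C_ℤ = {λ ∈ X : 0 < ⟨λ+ρ,β∨⟩ < p for all β ∈ Φ⁺}`. -/
def bottomAlcove (Φ Δ : Finset E) (p : ℕ) : Set E :=
  { lam ∈ weightLattice Φ | ∀ β ∈ posRoots Φ Δ,
      0 < pair (lam + rho Φ Δ) β ∧ pair (lam + rho Φ Δ) β < (p : ℝ) }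

/-- The closure `C̄_ℤ = {λ ∈ X : 0 ≤ ⟨λ+ρ,β∨⟩ ≤ p for all β ∈ Φ⁺}` of the
bottom `p`-alcove. -/
def closedAlcove (Φ Δ : Finset E) (p : ℕ) : Set E :=
  { lam ∈ weightLattice Φ | ∀ β ∈ posRoots Φ Δ,
      0 ≤ pair (lam + rho Φ Δ) β ∧ pair (lam + rho Φ Δ) β ≤ (p : ℝ) }

/-- Membership in `X⁺`, the set of dominant weights. -/
def isDominant (Φ Δ : Finset E) (lam : E) : Prop :=
  lam ∈ weightLattice Φ ∧ ∀ α ∈ Δ, 0 ≤ pair lam α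

/-- `a₀` is the highest short root of `Φ`: a root of minimal length such that
every root of the same length is `≤ a₀` (their difference is a nonnegative
integral combination of simple roots). -/
structure IsHighestShortRoot (Φ Δ : Finset E) (a₀ : E) : Prop where
  mem : a₀ ∈ Φ
  short : ∀ β ∈ Φ, ⟪a₀, a₀⟫ ≤ ⟪β, β⟫
  highest : ∀ β ∈ Φ, ⟪β, β⟫ = ⟪a₀, a₀⟫ →
      ∃ c : E → ℕ, a₀ - β = ∑ α ∈ Δ, (c α : ℝ) • α


/-- The length of `w ∈ W`: the minimal number of simple reflections (reflections
in the simple roots `α ∈ Δ`) needed to express `w` as a product. -/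
noncomputable def lengthW (Δ : Finset E) (w : E ≃ₗ[ℝ] E) : ℕ :=
  sInf { n | ∃ l : List (E ≃ₗ[ℝ] E), l.length = n ∧
      (∀ s ∈ l, ∃ α ∈ Δ, ∀ x, s x = x - pair x α • α) ∧ l.prod = w }

/-! ### The coroot pairing and reflections -/

lemma pair_sub (x y a : E) : pair (x - y) a = pair x a - pair y a := by
  simp only [pair, inner_sub_left]
  ring

lemma pair_smul (t : ℝ) (x a : E) : pair (t • x) a = t * pair x a := by
  simp only [pair, real_inner_smul_left]
  ring

lemma pair_sum (s : Finset E) (a : E) : pair (∑ x ∈ s, x) a = ∑ x ∈ s, pair x a := by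
  simp only [pair, sum_inner, Finset.mul_sum, Finset.sum_div]

lemma pair_neg_right (x a : E) : pair x (-a) = -pair x a := by
  simp only [pair, inner_neg_left, inner_neg_right, neg_neg, mul_neg, neg_div]

lemma pair_self {a : E} (ha : a ≠ 0) : pair a a = 2 :=
  mul_div_cancel_right₀ 2 (inner_self_ne_zero.mpr ha)

lemma pair_pos_iff {x a : E} (ha : a ≠ 0) : 0 < pair x a ↔ 0 < ⟪x, a⟫ := by
  rw [pair, div_pos_iff_of_pos_right (real_inner_self_pos.mpr ha), mul_pos_iff_of_pos_left two_pos]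

lemma pair_nonneg_iff {x a : E} (ha : a ≠ 0) : 0 ≤ pair x a ↔ 0 ≤ ⟪x, a⟫ := by
  rw [pair, le_div_iff₀ (real_inner_self_pos.mpr ha), zero_mul, mul_nonneg_iff_of_pos_left two_pos]

lemma pair_eq_zero_iff {x a : E} (ha : a ≠ 0) : pair x a = 0 ↔ ⟪x, a⟫ = 0 := by
  simp only [pair, div_eq_zero_iff, mul_eq_zero, two_ne_zero, false_or, inner_self_eq_zero, ha,
    or_false]

lemma pair_lt_two {a b : E} (hle : ⟪a, a⟫ ≤ ⟪b, b⟫) (hne : a ≠ b) (hb : b ≠ 0) :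
    pair a b < 2 := by
  have hsub : 0 < ⟪a - b, a - b⟫ := real_inner_self_pos.mpr (sub_ne_zero.mpr hne)
  rw [real_inner_sub_sub_self] at hsub
  rw [pair, div_lt_iff₀ (real_inner_self_pos.mpr hb)]
  linarith

lemma pair_map_map {u : E ≃ₗ[ℝ] E} (hu : ∀ x y, ⟪u x, u y⟫ = ⟪x, y⟫) (x a : E) :
    pair (u x) (u a) = pair x a := by
  simp only [pair, hu]

/-- The reflection `s_a` in the hyperplane orthogonal to `a`, as an element of `GL(E)`; it is the
identity when `a = 0`. -/
noncomputable def rootReflection (a : E) : E ≃ₗ[ℝ] E :=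
  (Submodule.span ℝ {a})ᗮ.reflection.toLinearEquiv

lemma rootReflection_apply (a x : E) : rootReflection a x = x - pair x a • a := by
  have hreflection : rootReflection a x = -(Submodule.span ℝ {a}).reflection x :=
    Submodule.reflection_orthogonal_apply _ x
  rw [hreflection, Submodule.reflection_singleton_apply, pair, real_inner_self_eq_norm_sq,
    real_inner_comm, mul_div_assoc, ← Nat.cast_smul_eq_nsmul ℝ, smul_smul]
  simp

lemma eq_rootReflection_iff {s : E ≃ₗ[ℝ] E} {a : E} :
    s = rootReflection a ↔ ∀ x, s x = x - pair x a • a := by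
  simp only [LinearEquiv.ext_iff, rootReflection_apply]

lemma rootReflection_rootReflection (a x : E) : rootReflection a (rootReflection a x) = x :=
  Submodule.reflection_reflection _ x

lemma rootReflection_mul_self (a : E) : rootReflection a * rootReflection a = 1 :=
  LinearEquiv.ext (rootReflection_rootReflection a)

lemma rootReflection_inv (a : E) : (rootReflection a)⁻¹ = rootReflection a :=
  inv_eq_of_mul_eq_one_left (rootReflection_mul_self a)

lemma rootReflection_self (a : E) : rootReflection a a = -a :=
  Submodule.reflection_orthogonalComplement_singleton_eq_neg a

lemma rootReflection_neg (a : E) : rootReflection (-a) = rootReflection a := by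
  ext x
  simp only [rootReflection_apply, pair_neg_right, neg_smul_neg]

lemma inner_rootReflection_rootReflection (a x y : E) :
    ⟪rootReflection a x, rootReflection a y⟫ = ⟪x, y⟫ :=
  LinearIsometryEquiv.inner_map_map _ x y

lemma inner_rootReflection_self (a x : E) : ⟪a, rootReflection a x⟫ = -⟪a, x⟫ := by
  rw [← inner_rootReflection_rootReflection a, rootReflection_rootReflection, rootReflection_self,
    inner_neg_left]

lemma pair_rootReflection_self (a x : E) : pair (rootReflection a x) a = -pair x a := by
  rw [← pair_map_map (inner_rootReflection_rootReflection a), rootReflection_rootReflection,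
    rootReflection_self, pair_neg_right]

/-- The reflection formula for coroots: `(s_a b)∨ = b∨ - ⟨a, b∨⟩ a∨`. -/
lemma pair_rootReflection_right (x a b : E) :
    pair x (rootReflection a b) = pair x b - pair a b * pair x a := by
  rw [← pair_map_map (inner_rootReflection_rootReflection a), rootReflection_rootReflection,
    rootReflection_apply, pair_sub, pair_smul, mul_comm]

lemma conj_rootReflection {u : E ≃ₗ[ℝ] E} (hu : ∀ x y, ⟪u x, u y⟫ = ⟪x, y⟫) (a : E) :
    u * rootReflection a * u⁻¹ = rootReflection (u a) := by
  rw [mul_inv_eq_iff_eq_mul]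
  ext x
  simp only [LinearEquiv.mul_apply, rootReflection_apply, map_sub, map_smul, pair_map_map hu]

/-! ### The Weyl group -/

variable {Φ Δ : Finset E}

lemma rootReflection_mem_Weyl {a : E} (ha : a ∈ Φ) : rootReflection a ∈ Weyl Φ :=
  Subgroup.subset_closure ⟨a, ha, rootReflection_apply a⟩

lemma inner_map_map_of_mem_Weyl {u : E ≃ₗ[ℝ] E} (hu : u ∈ Weyl Φ) (x y : E) :
    ⟪u x, u y⟫ = ⟪x, y⟫ := by
  induction hu using Subgroup.closure_induction generalizing x y with
  | mem s hs =>
    obtain ⟨a, -, hs⟩ := hs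
    rw [eq_rootReflection_iff.mpr hs, inner_rootReflection_rootReflection]
  | one => rfl
  | mul u v _ _ hu hv => rw [LinearEquiv.mul_apply, LinearEquiv.mul_apply, hu, hv]
  | inv u _ hu =>
    rw [← hu, ← LinearEquiv.mul_apply, ← LinearEquiv.mul_apply, mul_inv_cancel]
    rfl

lemma pair_apply_of_mem_Weyl {u : E ≃ₗ[ℝ] E} (hu : u ∈ Weyl Φ) (x a : E) :
    pair (u x) a = pair x (u⁻¹ a) := by
  rw [← pair_map_map (inner_map_map_of_mem_Weyl hu) x, ← LinearEquiv.mul_apply, mul_inv_cancel]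
  rfl

lemma sub_mem_weightLattice {x y : E} (hx : x ∈ weightLattice Φ) (hy : y ∈ weightLattice Φ) :
    x - y ∈ weightLattice Φ := by
  intro α hα
  obtain ⟨m, hm⟩ := hx α hα
  obtain ⟨n, hn⟩ := hy α hα
  exact ⟨m - n, by rw [pair_sub, hm, hn, Int.cast_sub]⟩

namespace IsRootSystem

lemma rootReflection_mem (hΦ : IsRootSystem Φ) {a b : E} (ha : a ∈ Φ) (hb : b ∈ Φ) :
    rootReflection a b ∈ Φ :=
  rootReflection_apply a b ▸ hΦ.reflect_mem a ha b hb

lemma neg_mem (hΦ : IsRootSystem Φ) {a : E} (ha : a ∈ Φ) : -a ∈ Φ :=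
  rootReflection_self a ▸ hΦ.rootReflection_mem ha ha

open scoped Pointwise in
lemma apply_mem_of_mem_Weyl (hΦ : IsRootSystem Φ) {u : E ≃ₗ[ℝ] E} (hu : u ∈ Weyl Φ) {b : E}
    (hb : b ∈ Φ) : u b ∈ Φ := by
  have hstab : Weyl Φ ≤ MulAction.stabilizer (E ≃ₗ[ℝ] E) (Φ : Set E) := by
    refine (Subgroup.closure_le _).mpr ?_
    rintro s ⟨a, ha, hs⟩
    refine (MulAction.mem_stabilizer_set' Φ.finite_toSet).mpr fun c hc => ?_
    rw [eq_rootReflection_iff.mpr hs]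
    exact hΦ.rootReflection_mem ha hc
  exact (MulAction.mem_stabilizer_set' Φ.finite_toSet).mp (hstab hu) hb

lemma apply_mem_weightLattice (hΦ : IsRootSystem Φ) {u : E ≃ₗ[ℝ] E} (hu : u ∈ Weyl Φ) {x : E}
    (hx : x ∈ weightLattice Φ) : u x ∈ weightLattice Φ := fun α hα =>
  pair_apply_of_mem_Weyl hu x α ▸ hx _ (hΦ.apply_mem_of_mem_Weyl (inv_mem hu) hα)

lemma exists_inner_ne_zero_of_inner_self_eq (hΦ : IsRootSystem Φ) {a b : E} (ha : a ∈ Φ)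
    (hb : b ∈ Φ) : ∃ g ∈ Φ, ⟪g, g⟫ = ⟪a, a⟫ ∧ ⟪g, b⟫ ≠ 0 := by
  by_contra! hcon
  let T : Set E := {x ∈ Φ | ∀ g ∈ Φ, ⟪g, g⟫ = ⟪a, a⟫ → ⟪g, x⟫ = 0}
  refine hΦ.irred (Φ \ T) T (Set.sdiff_union_of_subset fun x hx => hx.1)
    ⟨a, ha, fun haT => hΦ.ne_zero a ha (inner_self_eq_zero.mp (haT.2 a ha rfl))⟩ ⟨b, hb, hcon⟩ ?_
  rintro c ⟨hc, hcT⟩ d ⟨-, hd⟩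
  obtain ⟨g, hg, hgl, hgc⟩ : ∃ g ∈ Φ, ⟪g, g⟫ = ⟪a, a⟫ ∧ ⟪g, c⟫ ≠ 0 := by
    by_contra! hall
    exact hcT ⟨hc, hall⟩
  -- `d` is orthogonal to both `g` and `s_c g`, hence to their difference `⟨g, c∨⟩ c`.
  have hreflected : ⟪rootReflection c g, d⟫ = 0 :=
    hd _ (hΦ.rootReflection_mem hc hg) (by rw [inner_rootReflection_rootReflection, hgl])
  rw [rootReflection_apply, inner_sub_left, real_inner_smul_left, hd g hg hgl, zero_sub,
    neg_eq_zero, mul_eq_zero, pair_eq_zero_iff (hΦ.ne_zero c hc)] at hreflected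
  exact hreflected.resolve_left hgc

end IsRootSystem

/-! ### Positive roots and `ρ` -/

lemma mem_posRoots {b : E} :
    b ∈ posRoots Φ Δ ↔ b ∈ Φ ∧ ∃ c : E → ℕ, b = ∑ α ∈ Δ, (c α : ℝ) • α := by
  simp only [posRoots, Finset.mem_filter]

lemma inner_sum_natCast_smul_nonneg {x : E} (hx : ∀ α ∈ Δ, 0 ≤ ⟪x, α⟫) (c : E → ℕ) :
    0 ≤ ⟪x, ∑ α ∈ Δ, (c α : ℝ) • α⟫ := by
  simp only [inner_sum, real_inner_smul_right]
  exact Finset.sum_nonneg fun α hα => mul_nonneg (Nat.cast_nonneg _) (hx α hα)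

lemma inner_nonneg_of_mem_posRoots {x b : E} (hx : ∀ α ∈ Δ, 0 ≤ ⟪x, α⟫)
    (hb : b ∈ posRoots Φ Δ) : 0 ≤ ⟪x, b⟫ := by
  obtain ⟨-, c, rfl⟩ := mem_posRoots.mp hb
  exact inner_sum_natCast_smul_nonneg hx c

namespace IsBase

lemma span_eq_top (hΔ : IsBase Φ Δ) (hΦ : IsRootSystem Φ) :
    Submodule.span ℝ (Δ : Set E) = ⊤ := by
  have hcomb (c : E → ℕ) : ∑ α ∈ Δ, (c α : ℝ) • α ∈ Submodule.span ℝ (Δ : Set E) :=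
    sum_mem fun α hα => Submodule.smul_mem _ _ (Submodule.subset_span hα)
  rw [eq_top_iff, ← hΦ.span_top, Submodule.span_le]
  intro b hb
  rcases hΔ.root_decomp b hb with ⟨c, rfl⟩ | ⟨c, rfl⟩
  · exact hcomb c
  · exact neg_mem (hcomb c)

/-- The simple roots as a basis of `E`, giving access to the coefficients of a vector at the simple
roots. -/
noncomputable def simpleBasis (hΔ : IsBase Φ Δ) (hΦ : IsRootSystem Φ) : Module.Basis Δ ℝ E :=
  Module.Basis.mk hΔ.indep (by simpa using (hΔ.span_eq_top hΦ).ge)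

lemma simpleBasis_apply (hΔ : IsBase Φ Δ) (hΦ : IsRootSystem Φ) (α : Δ) :
    hΔ.simpleBasis hΦ α = α :=
  Module.Basis.mk_apply _ _ α

lemma simpleBasis_repr_self (hΔ : IsBase Φ Δ) (hΦ : IsRootSystem Φ) (α : Δ) :
    (hΔ.simpleBasis hΦ).repr α = Finsupp.single α 1 := by
  rw [← (hΔ.simpleBasis hΦ).repr_self, simpleBasis_apply]

lemma simpleBasis_repr_sum (hΔ : IsBase Φ Δ) (hΦ : IsRootSystem Φ) (c : E → ℝ) (γ : Δ) :
    (hΔ.simpleBasis hΦ).repr (∑ α ∈ Δ, c α • α) γ = c γ := by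
  rw [← Finset.sum_coe_sort Δ fun α => c α • α]
  simpa only [simpleBasis_apply] using
    congrFun ((hΔ.simpleBasis hΦ).repr_sum_self fun α : Δ => c α) γ

lemma simpleBasis_repr_nonneg (hΔ : IsBase Φ Δ) (hΦ : IsRootSystem Φ) {b : E}
    (hb : b ∈ posRoots Φ Δ) (γ : Δ) : 0 ≤ (hΔ.simpleBasis hΦ).repr b γ := by
  obtain ⟨-, c, rfl⟩ := mem_posRoots.mp hb
  rw [hΔ.simpleBasis_repr_sum hΦ fun α => c α]
  exact Nat.cast_nonneg _

lemma mem_posRoots_or_neg_mem_posRoots (hΔ : IsBase Φ Δ) (hΦ : IsRootSystem Φ) {b : E}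
    (hb : b ∈ Φ) : b ∈ posRoots Φ Δ ∨ -b ∈ posRoots Φ Δ := by
  refine (hΔ.root_decomp b hb).imp (fun hc => mem_posRoots.mpr ⟨hb, hc⟩) ?_
  rintro ⟨c, hc⟩
  exact mem_posRoots.mpr ⟨hΦ.neg_mem hb, c, neg_eq_iff_eq_neg.mpr hc⟩

lemma mem_posRoots_of_simpleBasis_repr_pos (hΔ : IsBase Φ Δ) (hΦ : IsRootSystem Φ) {b : E}
    (hb : b ∈ Φ) {γ : Δ} (hγ : 0 < (hΔ.simpleBasis hΦ).repr b γ) : b ∈ posRoots Φ Δ := by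
  refine (hΔ.mem_posRoots_or_neg_mem_posRoots hΦ hb).resolve_right fun hneg => ?_
  have hnonneg := hΔ.simpleBasis_repr_nonneg hΦ hneg γ
  rw [map_neg, Finsupp.neg_apply] at hnonneg
  linarith

lemma simple_mem_posRoots (hΔ : IsBase Φ Δ) (hΦ : IsRootSystem Φ) {α : E} (hα : α ∈ Δ) :
    α ∈ posRoots Φ Δ := by
  refine hΔ.mem_posRoots_of_simpleBasis_repr_pos hΦ (hΔ.subset hα) (γ := ⟨α, hα⟩) ?_
  rw [hΔ.simpleBasis_repr_self hΦ ⟨α, hα⟩, Finsupp.single_eq_same]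
  exact one_pos

lemma neg_notMem_posRoots (hΔ : IsBase Φ Δ) (hΦ : IsRootSystem Φ) {b : E}
    (hb : b ∈ posRoots Φ Δ) : -b ∉ posRoots Φ Δ := by
  intro hneg
  refine hΦ.ne_zero b (mem_posRoots.mp hb).1
    ((hΔ.simpleBasis hΦ).ext_elem fun γ => ?_)
  have hle := hΔ.simpleBasis_repr_nonneg hΦ hneg γ
  rw [map_neg, Finsupp.neg_apply, neg_nonneg] at hle
  rw [map_zero]
  exact hle.antisymm (hΔ.simpleBasis_repr_nonneg hΦ hb γ)

lemma exists_simpleBasis_repr_pos (hΔ : IsBase Φ Δ) (hΦ : IsRootSystem Φ) {α : Δ} {b : E}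
    (hb : b ∈ posRoots Φ Δ) (hne : b ≠ α) : ∃ γ ≠ α, 0 < (hΔ.simpleBasis hΦ).repr b γ := by
  by_contra! hcon
  set t := (hΔ.simpleBasis hΦ).repr b α
  have hrepr : (hΔ.simpleBasis hΦ).repr b = Finsupp.single α t :=
    Finsupp.ext fun γ => by
      by_cases hγ : γ = α
      · rw [hγ, Finsupp.single_eq_same]
      · rw [Finsupp.single_eq_of_ne hγ]
        exact (hcon γ hγ).antisymm (hΔ.simpleBasis_repr_nonneg hΦ hb γ)
  have hbα : b = t • (α : E) := (hΔ.simpleBasis hΦ).repr.injective <| by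
    rw [hrepr, map_smul, hΔ.simpleBasis_repr_self hΦ, Finsupp.smul_single_one]
  rcases hΦ.reduced α (hΔ.subset α.2) t (hbα ▸ (mem_posRoots.mp hb).1) with h | h
  · exact hne (by rw [hbα, h, one_smul])
  · linarith [hΔ.simpleBasis_repr_nonneg hΦ hb α]

/-- `b` has a positive coefficient at some simple root other than `α`, and `s_α` only changes the
coefficient at `α`. -/
lemma rootReflection_mem_posRoots (hΔ : IsBase Φ Δ) (hΦ : IsRootSystem Φ) {α b : E} (hα : α ∈ Δ)
    (hb : b ∈ posRoots Φ Δ) (hne : b ≠ α) : rootReflection α b ∈ posRoots Φ Δ := by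
  obtain ⟨γ, hγα, hγ⟩ := hΔ.exists_simpleBasis_repr_pos hΦ (α := ⟨α, hα⟩) hb hne
  refine hΔ.mem_posRoots_of_simpleBasis_repr_pos hΦ (γ := γ)
    (hΦ.rootReflection_mem (hΔ.subset hα) (mem_posRoots.mp hb).1) ?_
  rwa [rootReflection_apply, map_sub, map_smul, hΔ.simpleBasis_repr_self hΦ ⟨α, hα⟩,
    Finsupp.sub_apply, Finsupp.smul_apply, Finsupp.single_eq_of_ne hγα, smul_zero, sub_zero]

/-- The involution `s_α` of `Φ⁺ \ {α}` changes the sign of `⟨·, α∨⟩`, so only `α` itself contributes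
to `⟨2ρ, α∨⟩`. -/
lemma pair_rho (hΔ : IsBase Φ Δ) (hΦ : IsRootSystem Φ) {α : E} (hα : α ∈ Δ) :
    pair (rho Φ Δ) α = 1 := by
  classical
  have hmem (b : E) (hb : b ∈ (posRoots Φ Δ).erase α) :
      rootReflection α b ∈ (posRoots Φ Δ).erase α := by
    obtain ⟨hne, hpos⟩ := Finset.mem_erase.mp hb
    refine Finset.mem_erase.mpr ⟨fun h => ?_, hΔ.rootReflection_mem_posRoots hΦ hα hpos hne⟩
    have hbα : b = -α := by rw [← rootReflection_rootReflection α b, h, rootReflection_self]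
    exact hΔ.neg_notMem_posRoots hΦ (hΔ.simple_mem_posRoots hΦ hα) (hbα ▸ hpos)
  have hcancel : ∑ b ∈ (posRoots Φ Δ).erase α, pair b α = 0 := by
    refine Finset.sum_involution (fun b _ => rootReflection α b)
      (fun b _ => by rw [pair_rootReflection_self, add_neg_cancel]) (fun b _ hb hfix => hb ?_)
      hmem (fun b _ => rootReflection_rootReflection α b)
    have hneg := pair_rootReflection_self α b
    rw [hfix] at hneg
    linarith
  rw [rho, pair_smul, pair_sum, ← Finset.add_sum_erase _ _ (hΔ.simple_mem_posRoots hΦ hα), hcancel,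
    pair_self (hΦ.ne_zero α (hΔ.subset hα))]
  norm_num

lemma inner_rho_pos (hΔ : IsBase Φ Δ) (hΦ : IsRootSystem Φ) {b : E} (hb : b ∈ posRoots Φ Δ) :
    0 < ⟪rho Φ Δ, b⟫ := by
  have hsimple : ∀ α ∈ Δ, 0 < ⟪rho Φ Δ, α⟫ := fun α hα => by
    rw [← pair_pos_iff (hΦ.ne_zero α (hΔ.subset hα)), hΔ.pair_rho hΦ hα]
    exact one_pos
  obtain ⟨hbΦ, c, rfl⟩ := mem_posRoots.mp hb
  obtain ⟨α, hα, hcα⟩ := Finset.exists_ne_zero_of_sum_ne_zero (hΦ.ne_zero _ hbΦ)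
  have hcα : c α ≠ 0 := fun h => hcα (by rw [h, Nat.cast_zero, zero_smul])
  simp only [inner_sum, real_inner_smul_right]
  exact Finset.sum_pos' (fun γ hγ => mul_nonneg (Nat.cast_nonneg _) (hsimple γ hγ).le)
    ⟨α, hα, mul_pos (Nat.cast_pos.mpr (Nat.pos_of_ne_zero hcα)) (hsimple α hα)⟩

lemma mem_posRoots_of_inner_rho_pos (hΔ : IsBase Φ Δ) (hΦ : IsRootSystem Φ) {b : E} (hb : b ∈ Φ)
    (hpos : 0 < ⟪rho Φ Δ, b⟫) : b ∈ posRoots Φ Δ := by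
  refine (hΔ.mem_posRoots_or_neg_mem_posRoots hΦ hb).resolve_right fun hneg => ?_
  have hneg := hΔ.inner_rho_pos hΦ hneg
  rw [inner_neg_right] at hneg
  linarith

lemma exists_simple_inner_pos (hΦ : IsRootSystem Φ) {b : E} (hb : b ∈ posRoots Φ Δ) :
    ∃ α ∈ Δ, 0 < ⟪b, α⟫ := by
  by_contra! hcon
  have hneg := inner_nonneg_of_mem_posRoots (x := -b)
    (fun α hα => by rw [inner_neg_left]; linarith [hcon α hα]) hb
  rw [inner_neg_left] at hneg
  linarith [real_inner_self_pos.mpr (hΦ.ne_zero b (mem_posRoots.mp hb).1)]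

end IsBase

/-! ### Simple reflections and the exchange condition -/

/-- The product in `GL(E)` of the simple reflections named by a word in the simple roots. -/
noncomputable def wordProd (l : List Δ) : E ≃ₗ[ℝ] E :=
  (l.map fun α : Δ => rootReflection (α : E)).prod

lemma wordProd_nil : wordProd ([] : List Δ) = 1 := rfl

lemma wordProd_cons (α : Δ) (l : List Δ) :
    wordProd (α :: l) = rootReflection (α : E) * wordProd l := by
  rw [wordProd, wordProd, List.map_cons, List.prod_cons]

lemma wordProd_concat (l : List Δ) (α : Δ) :
    wordProd (l ++ [α]) = wordProd l * rootReflection (α : E) := by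
  simp only [wordProd, List.map_append, List.prod_append, List.map_singleton, List.prod_singleton]

lemma wordProd_reverse (l : List Δ) : wordProd l.reverse = (wordProd l)⁻¹ := by
  simp only [wordProd, List.prod_inv_reverse, List.map_map, List.map_reverse, Function.comp_def,
    rootReflection_inv]

lemma exists_map_rootReflection_eq_iff {l : List (E ≃ₗ[ℝ] E)} :
    (∃ m : List Δ, (m.map fun α : Δ => rootReflection (α : E)) = l) ↔
      ∀ s ∈ l, ∃ α ∈ Δ, ∀ x, s x = x - pair x α • α := by
  have hrange := Set.ext_iff.mp (Set.range_list_map fun α : Δ => rootReflection (α : E)) l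
  simpa only [Set.mem_range, Set.mem_ofPred_eq, Subtype.exists, exists_prop, eq_comm,
    eq_rootReflection_iff] using hrange

lemma lengthW_eq_sInf_length (Δ : Finset E) (w : E ≃ₗ[ℝ] E) :
    lengthW Δ w = sInf {n | ∃ l : List Δ, l.length = n ∧ wordProd l = w} := by
  simp only [lengthW, ← exists_map_rootReflection_eq_iff]
  congr! 3
  constructor
  · rintro ⟨_, hlen, ⟨m, rfl⟩, hprod⟩
    exact ⟨m, by simpa using hlen, hprod⟩
  · rintro ⟨m, hlen, hprod⟩
    exact ⟨_, by simpa using hlen, ⟨m, rfl⟩, hprod⟩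

lemma lengthW_wordProd_le (l : List Δ) : lengthW Δ (wordProd l) ≤ l.length := by
  rw [lengthW_eq_sInf_length]
  exact Nat.sInf_le ⟨l, rfl, rfl⟩

lemma lengthW_inv (Δ : Finset E) (w : E ≃ₗ[ℝ] E) : lengthW Δ w⁻¹ = lengthW Δ w := by
  simp only [lengthW_eq_sInf_length]
  congr! 3 with n
  rw [List.reverse_surjective.exists]
  simp only [List.length_reverse, wordProd_reverse, inv_inj]

namespace IsBase

/-- Take a counterexample `g` minimizing `⟪ρ, g⟫`: a simple root `α` with `⟪g, α⟫ > 0` yields the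
lower positive root `s_α g`, whose reflection is conjugate to `s_g` under `s_α`. -/
lemma rootReflection_mem_closure (hΔ : IsBase Φ Δ) (hΦ : IsRootSystem Φ) {b : E}
    (hb : b ∈ posRoots Φ Δ) :
    rootReflection b ∈ Subgroup.closure (rootReflection '' (Δ : Set E)) := by
  classical
  by_contra hcon
  obtain ⟨g, hg, hmin⟩ := ((posRoots Φ Δ).filter fun g =>
    rootReflection g ∉ Subgroup.closure (rootReflection '' (Δ : Set E))).exists_min_image
      (fun g => ⟪rho Φ Δ, g⟫) ⟨b, Finset.mem_filter.mpr ⟨hb, hcon⟩⟩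
  obtain ⟨hgpos, hgW⟩ := Finset.mem_filter.mp hg
  obtain ⟨α, hα, hgα⟩ := exists_simple_inner_pos hΦ hgpos
  have hαW : rootReflection α ∈ Subgroup.closure (rootReflection '' (Δ : Set E)) :=
    Subgroup.subset_closure (Set.mem_image_of_mem _ hα)
  have hne : g ≠ α := fun h => hgW (h ▸ hαW)
  have hlower : ⟪rho Φ Δ, rootReflection α g⟫ < ⟪rho Φ Δ, g⟫ := by
    rw [rootReflection_apply, inner_sub_right, real_inner_smul_right, sub_lt_self_iff]
    exact mul_pos ((pair_pos_iff (hΦ.ne_zero α (hΔ.subset hα))).mpr hgα)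
      (hΔ.inner_rho_pos hΦ (hΔ.simple_mem_posRoots hΦ hα))
  refine hlower.not_ge (hmin _ (Finset.mem_filter.mpr
    ⟨hΔ.rootReflection_mem_posRoots hΦ hα hgpos hne, fun hW => hgW ?_⟩))
  rw [← rootReflection_rootReflection α g,
    ← conj_rootReflection (inner_rootReflection_rootReflection α)]
  exact mul_mem (mul_mem hαW hW) (inv_mem hαW)

lemma Weyl_le_closure (hΔ : IsBase Φ Δ) (hΦ : IsRootSystem Φ) :
    Weyl Φ ≤ Subgroup.closure (rootReflection '' (Δ : Set E)) := by
  refine (Subgroup.closure_le _).mpr ?_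
  rintro s ⟨b, hb, hs⟩
  rw [eq_rootReflection_iff.mpr hs]
  rcases hΔ.mem_posRoots_or_neg_mem_posRoots hΦ hb with hpos | hneg
  · exact hΔ.rootReflection_mem_closure hΦ hpos
  · exact rootReflection_neg b ▸ hΔ.rootReflection_mem_closure hΦ hneg

lemma exists_wordProd_eq (hΔ : IsBase Φ Δ) (hΦ : IsRootSystem Φ) {u : E ≃ₗ[ℝ] E}
    (hu : u ∈ Weyl Φ) : ∃ l : List Δ, wordProd l = u := by
  replace hu := hΔ.Weyl_le_closure hΦ hu
  induction hu using Subgroup.closure_induction_left with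
  | one => exact ⟨[], wordProd_nil⟩
  | mul_left s hs v _ hv =>
    obtain ⟨α, hα, rfl⟩ := hs
    obtain ⟨l, rfl⟩ := hv
    exact ⟨⟨α, hα⟩ :: l, wordProd_cons _ l⟩
  | inv_mul_cancel s hs v _ hv =>
    obtain ⟨α, hα, rfl⟩ := hs
    obtain ⟨l, rfl⟩ := hv
    exact ⟨⟨α, hα⟩ :: l, by rw [wordProd_cons, rootReflection_inv]⟩

lemma exists_reduced_word (hΔ : IsBase Φ Δ) (hΦ : IsRootSystem Φ) {u : E ≃ₗ[ℝ] E}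
    (hu : u ∈ Weyl Φ) : ∃ l : List Δ, l.length = lengthW Δ u ∧ wordProd l = u := by
  obtain ⟨l, hl⟩ := hΔ.exists_wordProd_eq hΦ hu
  have hne : {n | ∃ l : List Δ, l.length = n ∧ wordProd l = u}.Nonempty := ⟨_, l, rfl, hl⟩
  rw [lengthW_eq_sInf_length]
  exact Nat.sInf_mem hne

lemma wordProd_mem_Weyl (hΔ : IsBase Φ Δ) (l : List Δ) : wordProd l ∈ Weyl Φ :=
  list_prod_mem (List.forall_mem_map.mpr fun α _ => rootReflection_mem_Weyl (hΔ.subset α.2))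

/-- The exchange condition. The deleted letter is the one at which the images of `α` under the
suffixes of the word turn negative. -/
lemma exists_wordProd_mul_eq_eraseIdx (hΔ : IsBase Φ Δ) (hΦ : IsRootSystem Φ) {α : Δ} {l : List Δ}
    (hneg : wordProd l α ∉ posRoots Φ Δ) :
    ∃ i < l.length, wordProd l * rootReflection (α : E) = wordProd (l.eraseIdx i) := by
  induction l with
  | nil => exact absurd (hΔ.simple_mem_posRoots hΦ α.2) hneg
  | cons δ t ih =>
    by_cases hpos : wordProd t α ∈ posRoots Φ Δ
    · have htα : wordProd t α = δ := by
        by_contra hne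
        rw [wordProd_cons, LinearEquiv.mul_apply] at hneg
        exact hneg (hΔ.rootReflection_mem_posRoots hΦ δ.2 hpos hne)
      have hcomm : wordProd t * rootReflection (α : E) = rootReflection (δ : E) * wordProd t := by
        rw [← htα, ← mul_inv_eq_iff_eq_mul]
        exact conj_rootReflection (inner_map_map_of_mem_Weyl (hΔ.wordProd_mem_Weyl t)) α
      refine ⟨0, by simp, ?_⟩
      rw [wordProd_cons, mul_assoc, hcomm, ← mul_assoc, rootReflection_mul_self, one_mul,
        List.eraseIdx_cons_zero]
    · obtain ⟨i, hi, heq⟩ := ih hpos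
      refine ⟨i + 1, by simpa using hi, ?_⟩
      rw [wordProd_cons, mul_assoc, heq, List.eraseIdx_cons_succ, wordProd_cons]

lemma eq_one_of_forall_apply_mem_posRoots (hΔ : IsBase Φ Δ) (hΦ : IsRootSystem Φ)
    {u : E ≃ₗ[ℝ] E} (hu : u ∈ Weyl Φ) (hpos : ∀ α ∈ Δ, u α ∈ posRoots Φ Δ) : u = 1 := by
  obtain ⟨l, hlen, rfl⟩ := hΔ.exists_reduced_word hΦ hu
  rcases List.eq_nil_or_concat' l with rfl | ⟨t, α, rfl⟩
  · exact wordProd_nil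
  have hneg : wordProd t α ∉ posRoots Φ Δ := fun htα => by
    refine hΔ.neg_notMem_posRoots hΦ htα ?_
    simpa [wordProd_concat, rootReflection_self] using hpos α α.2
  obtain ⟨i, hi, heq⟩ := hΔ.exists_wordProd_mul_eq_eraseIdx hΦ hneg
  have hshort := lengthW_wordProd_le (t.eraseIdx i)
  rw [← heq, ← wordProd_concat, ← hlen, List.length_eraseIdx_of_lt hi, List.length_append,
    List.length_singleton] at hshort
  omega

lemma eq_one_of_apply_rho_eq (hΔ : IsBase Φ Δ) (hΦ : IsRootSystem Φ) {u : E ≃ₗ[ℝ] E}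
    (hu : u ∈ Weyl Φ) (hfix : u (rho Φ Δ) = rho Φ Δ) : u = 1 := by
  refine hΔ.eq_one_of_forall_apply_mem_posRoots hΦ hu fun α hα =>
    hΔ.mem_posRoots_of_inner_rho_pos hΦ (hΦ.apply_mem_of_mem_Weyl hu (hΔ.subset hα)) ?_
  rw [← hfix, inner_map_map_of_mem_Weyl hu]
  exact hΔ.inner_rho_pos hΦ (hΔ.simple_mem_posRoots hΦ hα)

end IsBase

/-! ### The highest short root -/

lemma IsBase.exists_dominant_forall_pair_rho_le (hΔ : IsBase Φ Δ) (hΦ : IsRootSystem Φ) :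
    ∃ m ∈ Φ, (∀ α ∈ Δ, 0 ≤ ⟪m, α⟫) ∧ ∀ b ∈ Φ, pair (rho Φ Δ) b ≤ pair (rho Φ Δ) m := by
  obtain ⟨m, hm, hmax⟩ := Φ.exists_max_image (fun b => pair (rho Φ Δ) b) hΦ.nonempty
  refine ⟨m, hm, fun α hα => ?_, hmax⟩
  have hreflected := hmax _ (hΦ.rootReflection_mem (hΔ.subset hα) hm)
  rw [pair_rootReflection_right, hΔ.pair_rho hΦ hα] at hreflected
  rw [real_inner_comm, ← pair_nonneg_iff (hΦ.ne_zero m hm)]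
  linarith

namespace IsHighestShortRoot

variable {a₀ : E}

lemma inner_simple_nonneg (ha₀ : IsHighestShortRoot Φ Δ a₀) (hΦ : IsRootSystem Φ)
    (hΔ : IsBase Φ Δ) {α : E} (hα : α ∈ Δ) : 0 ≤ ⟪a₀, α⟫ := by
  obtain ⟨c, hc⟩ := ha₀.highest (rootReflection α a₀)
    (hΦ.rootReflection_mem (hΔ.subset hα) ha₀.mem) (inner_rootReflection_rootReflection α a₀ a₀)
  rw [rootReflection_apply, sub_sub_cancel] at hc
  have hcoeff : pair a₀ α = c α := by
    rw [← hΔ.simpleBasis_repr_sum hΦ (fun γ => c γ) ⟨α, hα⟩, ← hc, map_smul,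
      hΔ.simpleBasis_repr_self hΦ ⟨α, hα⟩, Finsupp.smul_single_one, Finsupp.single_eq_same]
  rw [← pair_nonneg_iff (hΦ.ne_zero α (hΔ.subset hα)), hcoeff]
  exact Nat.cast_nonneg _

lemma inner_pos_of_dominant (ha₀ : IsHighestShortRoot Φ Δ a₀) (hΦ : IsRootSystem Φ) {m : E}
    (hm : m ∈ Φ) (hdom : ∀ α ∈ Δ, 0 ≤ ⟪m, α⟫) : 0 < ⟪a₀, m⟫ := by
  have hle (g : E) (hg : g ∈ Φ) (hlen : ⟪g, g⟫ = ⟪a₀, a₀⟫) : ⟪g, m⟫ ≤ ⟪a₀, m⟫ := by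
    obtain ⟨c, hc⟩ := ha₀.highest g hg hlen
    rw [← sub_nonneg, ← inner_sub_left, hc, real_inner_comm]
    exact inner_sum_natCast_smul_nonneg hdom c
  obtain ⟨g, hg, hlen, hgm⟩ := hΦ.exists_inner_ne_zero_of_inner_self_eq ha₀.mem hm
  have hle_neg := hle (-g) (hΦ.neg_mem hg) (by rw [inner_neg_neg, hlen])
  rw [inner_neg_left] at hle_neg
  exact (abs_pos.mpr hgm).trans_le (abs_le'.mpr ⟨hle g hg hlen, hle_neg⟩)

/-- For `b ≠ a₀` the pairing `⟨a₀, b∨⟩` is `1`, so `a₀∨ - b∨` is the coroot of `-s_{a₀} b`, which is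
positive because `a₀` is dominant. -/
lemma pair_rho_le_of_inner_pos (ha₀ : IsHighestShortRoot Φ Δ a₀) (hΦ : IsRootSystem Φ)
    (hΔ : IsBase Φ Δ) {b : E} (hb : b ∈ Φ) (hinner : 0 < ⟪a₀, b⟫) :
    pair (rho Φ Δ) b ≤ pair (rho Φ Δ) a₀ := by
  obtain rfl | hne := eq_or_ne a₀ b
  · rfl
  have hpair : pair a₀ b = 1 := by
    have hpos := (pair_pos_iff (hΦ.ne_zero b hb)).mpr hinner
    have hlt := pair_lt_two (ha₀.short b hb) hne (hΦ.ne_zero b hb)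
    obtain ⟨n, hn⟩ := hΦ.pair_int b hb a₀ ha₀.mem
    rw [hn] at hpos hlt ⊢
    norm_cast at hpos hlt ⊢
    omega
  have hmem : rootReflection a₀ b ∈ Φ := hΦ.rootReflection_mem ha₀.mem hb
  have hneg : -rootReflection a₀ b ∈ posRoots Φ Δ := by
    refine (hΔ.mem_posRoots_or_neg_mem_posRoots hΦ hmem).resolve_left fun hpos => ?_
    have hnonneg := inner_nonneg_of_mem_posRoots
      (fun α hα => ha₀.inner_simple_nonneg hΦ hΔ hα) hpos
    rw [inner_rootReflection_self] at hnonneg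
    linarith
  have hcoroot := (pair_pos_iff (neg_ne_zero.mpr (hΦ.ne_zero _ hmem))).mpr
    (hΔ.inner_rho_pos hΦ hneg)
  rw [pair_neg_right, pair_rootReflection_right, hpair] at hcoroot
  linarith

lemma pair_rho_le (ha₀ : IsHighestShortRoot Φ Δ a₀) (hΦ : IsRootSystem Φ) (hΔ : IsBase Φ Δ)
    {b : E} (hb : b ∈ Φ) : pair (rho Φ Δ) b ≤ pair (rho Φ Δ) a₀ := by
  obtain ⟨m, hm, hdom, hmax⟩ := hΔ.exists_dominant_forall_pair_rho_le hΦ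
  exact (hmax b hb).trans
    (ha₀.pair_rho_le_of_inner_pos hΦ hΔ hm (ha₀.inner_pos_of_dominant hΦ hm hdom))

lemma abs_pair_rho_le (ha₀ : IsHighestShortRoot Φ Δ a₀) (hΦ : IsRootSystem Φ) (hΔ : IsBase Φ Δ)
    {b : E} (hb : b ∈ Φ) : |pair (rho Φ Δ) b| ≤ pair (rho Φ Δ) a₀ := by
  refine abs_le'.mpr ⟨ha₀.pair_rho_le hΦ hΔ hb, ?_⟩
  rw [← pair_neg_right]
  exact ha₀.pair_rho_le hΦ hΔ (hΦ.neg_mem hb)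

end IsHighestShortRoot

/-! ### Congruence of `uρ` and `ρ` modulo `pX` -/

lemma eq_zero_of_abs_one_add_mul_lt {p : ℝ} {n : ℤ} (hlt : |1 + p * n| < p - 1) : n = 0 := by
  by_contra hn
  have hp : 0 ≤ p := by linarith [abs_nonneg (1 + p * n)]
  have hn : (1 : ℝ) ≤ |(n : ℝ)| := by exact_mod_cast Int.one_le_abs hn
  have hle : p ≤ |1 + p * n| + 1 := calc
    p ≤ p * |(n : ℝ)| := le_mul_of_one_le_right hp hn
    _ = |1 + p * n - 1| := by rw [add_sub_cancel_left, abs_mul, abs_of_nonneg hp]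
    _ ≤ |1 + p * n| + 1 := by simpa using abs_sub (1 + p * n) 1
  linarith

namespace IsBase

lemma eq_zero_of_forall_pair_eq_zero (hΔ : IsBase Φ Δ) (hΦ : IsRootSystem Φ) {x : E}
    (hx : ∀ α ∈ Δ, pair x α = 0) : x = 0 := by
  refine InnerProductSpace.ext_inner_right_basis (hΔ.simpleBasis hΦ) fun α => ?_
  rw [simpleBasis_apply, inner_zero_left]
  exact (pair_eq_zero_iff (hΦ.ne_zero α (hΔ.subset α.2))).mp (hx α α.2)

lemma eq_one_of_apply_rho_sub_rho_eq_smul (hΔ : IsBase Φ Δ) (hΦ : IsRootSystem Φ) {p : ℝ}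
    (hp : ∀ b ∈ Φ, |pair (rho Φ Δ) b| < p - 1) {u : E ≃ₗ[ℝ] E} (hu : u ∈ Weyl Φ) {τ : E}
    (hτ : τ ∈ weightLattice Φ) (hcong : u (rho Φ Δ) - rho Φ Δ = p • τ) : u = 1 := by
  refine hΔ.eq_one_of_apply_rho_eq hΦ hu
    (sub_eq_zero.mp (hΔ.eq_zero_of_forall_pair_eq_zero hΦ fun α hα => ?_))
  obtain ⟨n, hn⟩ := hτ α (hΔ.subset hα)
  have hpair : pair (rho Φ Δ) (u⁻¹ α) = 1 + p * n := by
    rw [← pair_apply_of_mem_Weyl hu, ← hΔ.pair_rho hΦ hα, ← hn, ← pair_smul, ← hcong, pair_sub,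
      add_sub_cancel]
  have hbound := hp _ (hΦ.apply_mem_of_mem_Weyl (inv_mem hu) (hΔ.subset hα))
  rw [hpair] at hbound
  rw [hcong, pair_smul, hn, eq_zero_of_abs_one_add_mul_lt hbound, Int.cast_zero, mul_zero]

lemma eq_inv_of_dotAct_eq_smul (hΔ : IsBase Φ Δ) (hΦ : IsRootSystem Φ) {p : ℝ}
    (hp : ∀ b ∈ Φ, |pair (rho Φ Δ) b| < p - 1) {w v : E ≃ₗ[ℝ] E} (hw : w ∈ Weyl Φ)
    (hv : v ∈ Weyl Φ) {σ τ : E} (hσ : σ ∈ weightLattice Φ) (hτ : τ ∈ weightLattice Φ)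
    (heq : dotAct Φ Δ v (dotAct Φ Δ w 0 + p • σ) = p • τ) : v = w⁻¹ := by
  have hcong : (v * w) (rho Φ Δ) - rho Φ Δ = p • (τ - v σ) := by
    rw [smul_sub, ← heq, dotAct, dotAct, LinearEquiv.mul_apply]
    simp only [zero_add, map_add, map_sub, map_smul]
    abel
  exact eq_inv_of_mul_eq_one_left <| hΔ.eq_one_of_apply_rho_sub_rho_eq_smul hΦ hp (mul_mem hv hw)
    (sub_mem_weightLattice hτ (hΦ.apply_mem_weightLattice hv hσ)) hcong

end IsBase

lemma dotAct_symm_dotAct_zero_add_smul (Φ Δ : Finset E) (w : E ≃ₗ[ℝ] E) (p : ℝ) (σ : E) :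
    dotAct Φ Δ w.symm (dotAct Φ Δ w 0 + p • σ) = p • w.symm σ := by
  rw [dotAct, dotAct, zero_add, add_right_comm, sub_add_cancel, map_add, map_smul,
    LinearEquiv.symm_apply_apply, add_sub_cancel_left]

theorem statement10_general (hΦ : IsRootSystem Φ) (hΔ : IsBase Φ Δ)
    {a₀ : E} (ha₀ : IsHighestShortRoot Φ Δ a₀) {p : ℝ} (hp : pair (rho Φ Δ) a₀ + 1 < p)
    {lam : E} {w : E ≃ₗ[ℝ] E} (hw : w ∈ Weyl Φ) {σ : E} (hσ : σ ∈ weightLattice Φ)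
    (hlink : lam = dotAct Φ Δ w 0 + p • σ)
    {w' : E ≃ₗ[ℝ] E} (hw' : w' ∈ Weyl Φ) {σ' : E} (hσ' : σ' ∈ weightLattice Φ)
    (heq : dotAct Φ Δ w' lam = p • σ') :
    w' = w.symm ∧ σ' = w.symm σ ∧
      (∃! v : E ≃ₗ[ℝ] E, v ∈ Weyl Φ ∧ ∃ τ ∈ weightLattice Φ, dotAct Φ Δ v lam = p • τ) ∧
      lengthW Δ w' = lengthW Δ w := by
  subst hlink
  have hbound : ∀ b ∈ Φ, |pair (rho Φ Δ) b| < p - 1 := fun b hb =>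
    (ha₀.abs_pair_rho_le hΦ hΔ hb).trans_lt (lt_sub_iff_add_lt.mpr hp)
  have hp0 : 0 < p := by linarith [(abs_nonneg _).trans_lt (hbound a₀ ha₀.mem)]
  obtain rfl : w' = w.symm := hΔ.eq_inv_of_dotAct_eq_smul hΦ hbound hw hw' hσ hσ' heq
  have hσ'_eq : σ' = w.symm σ := by
    rw [dotAct_symm_dotAct_zero_add_smul] at heq
    exact (smul_right_injective E hp0.ne' heq).symm
  refine ⟨rfl, hσ'_eq, ⟨w.symm, ⟨hw', σ', hσ', heq⟩, ?_⟩, lengthW_inv Δ w⟩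
  rintro v ⟨hv, τ, hτ, hvτ⟩
  exact hΔ.eq_inv_of_dotAct_eq_smul hΦ hbound hw hv hσ hτ hvτ

/-- Let `p` be a prime with `p > h`, and let
`λ = w·0 + pσ ∈ X⁺ ∩ C̄_ℤ` with `w ∈ W` and `σ ∈ X`.  If `w' ∈ W` and `σ' ∈ X`
satisfy `w'·λ = pσ'`, then `w' = w⁻¹` and `σ' = w⁻¹σ`.  In particular, there is
exactly one `w' ∈ W` for which `w'·λ` lies in `pX`, and its length equals the
length of `w`. -/
theorem statement10
    (Φ Δ : Finset E) (hΦ : IsRootSystem Φ) (hΔ : IsBase Φ Δ)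
    (a₀ : E) (ha₀ : IsHighestShortRoot Φ Δ a₀)
    (h : ℕ) (hcox : (h : ℝ) = pair (rho Φ Δ) a₀ + 1)
    (p : ℕ) (hp : p.Prime) (hbig : h < p)
    (lam : E) (hdom : isDominant Φ Δ lam) (halc : lam ∈ closedAlcove Φ Δ p)
    (w : E ≃ₗ[ℝ] E) (hw : w ∈ Weyl Φ) (σ : E) (hσ : σ ∈ weightLattice Φ)
    (hlink : lam = dotAct Φ Δ w 0 + (p : ℝ) • σ)
    (w' : E ≃ₗ[ℝ] E) (hw' : w' ∈ Weyl Φ) (σ' : E) (hσ' : σ' ∈ weightLattice Φ)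
    (heq : dotAct Φ Δ w' lam = (p : ℝ) • σ') :
    w' = w.symm ∧ σ' = w.symm σ ∧
      (∃! v : E ≃ₗ[ℝ] E, v ∈ Weyl Φ ∧ ∃ τ ∈ weightLattice Φ,
        dotAct Φ Δ v lam = (p : ℝ) • τ) ∧
      lengthW Δ w' = lengthW Δ w := by
  have hp_lt : pair (rho Φ Δ) a₀ + 1 < p := hcox ▸ Nat.cast_lt.mpr hbig
  exact statement10_general hΦ hΔ ha₀ hp_lt hw hσ hlink hw' hσ' heq

end PaperDNN
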